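/- Let c be a real number with 0 < c < 2, and let q : ℕ → ℕ be any sequence with q(n)/n → c as n → ∞. Then the variance Var(n,q(n)) of the number of bridges over bubbles of size q(n) in linear chord diagrams with n chords satisfies Var(n, q(n)) · 4n³ / (q(n)²·(2n − q(n))²) → 1 as n → ∞; that is, the variance is asymptotic to q²(2n−q)²/(4n³). -/

import Mathlib

namespace ChordBubbles

/-- A linear chord diagram with `n` chords: a fixed-point-free involution of `Fin (2*n)`. -/
def IsDiagram (n : ℕ) (f : Equiv.Perm (Fin (2 * n))) : Prop :=
  (∀ i, f (f i) = i) ∧ ∀ i, f i ≠ i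

/-- Vertex `i` is an endpoint of a short chord (a chord joining adjacent vertices). -/
def ShortEnd (n : ℕ) (f : Equiv.Perm (Fin (2 * n))) (i : Fin (2 * n)) : Prop :=
  (f i).val = i.val + 1 ∨ (f i).val + 1 = i.val

/-- `[a, b]` delimits a bubble: a maximal nonempty interval of vertices none of which is an
endpoint of a short chord. -/
def IsBubble (n : ℕ) (f : Equiv.Perm (Fin (2 * n))) (a b : ℕ) : Prop :=
  a ≤ b ∧ b < 2 * n ∧
  (∀ i : Fin (2 * n), a ≤ i.val → i.val ≤ b → ¬ ShortEnd n f i) ∧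
  (a = 0 ∨ ∃ j : Fin (2 * n), j.val + 1 = a ∧ ShortEnd n f j) ∧
  (b + 1 = 2 * n ∨ ∃ j : Fin (2 * n), j.val = b + 1 ∧ ShortEnd n f j)

/-- The size (number of vertices) of the bubble `[a, b]`. -/
def bubbleSize (a b : ℕ) : ℕ := b + 1 - a

/-- The number of bridges of the bubble `[a, b]` under the diagram `f`: the number of chords
joining a vertex inside the bubble to one outside it. -/
noncomputable def bridges (n : ℕ) (f : Equiv.Perm (Fin (2 * n))) (a b : ℕ) : ℕ :=
  Nat.card {i : Fin (2 * n) // (a ≤ i.val ∧ i.val ≤ b) ∧ ¬ (a ≤ (f i).val ∧ (f i).val ≤ b)}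

/-- `N n q b` : the number of pairs (diagram, bubble) where the diagram has `n` chords and the
bubble has size `q` and exactly `b` bridges. -/
noncomputable def N (n q b : ℕ) : ℕ :=
  Nat.card {p : Equiv.Perm (Fin (2 * n)) × ℕ × ℕ //
    IsDiagram n p.1 ∧ IsBubble n p.1 p.2.1 p.2.2 ∧
    bubbleSize p.2.1 p.2.2 = q ∧ bridges n p.1 p.2.1 p.2.2 = b}

/-- The mean number of bridges over all bubbles of size `q` in diagrams with `n` chords. -/
noncomputable def meanBridges (n q : ℕ) : ℝ :=
  (∑ b ∈ Finset.range (2 * n + 1), (b : ℝ) * N n q b) /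
  (∑ b ∈ Finset.range (2 * n + 1), (N n q b : ℝ))

/-- The variance of the number of bridges over all bubbles of size `q` in diagrams with
`n` chords. -/
noncomputable def varBridges (n q : ℕ) : ℝ :=
  (∑ b ∈ Finset.range (2 * n + 1), ((b : ℝ) - meanBridges n q) ^ 2 * N n q b) /
  (∑ b ∈ Finset.range (2 * n + 1), (N n q b : ℝ))

section aux
open Finset

open Classical in
noncomputable def PP (n q : ℕ) : Finset (Equiv.Perm (Fin (2 * n)) × ℕ × ℕ) :=
  (univ ×ˢ range (2 * n) ×ˢ range (2 * n)).filter
    (fun p => IsDiagram n p.1 ∧ IsBubble n p.1 p.2.1 p.2.2 ∧ bubbleSize p.2.1 p.2.2 = q)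

lemma mem_PP {n q : ℕ} {p : Equiv.Perm (Fin (2 * n)) × ℕ × ℕ} :
    p ∈ PP n q ↔ IsDiagram n p.1 ∧ IsBubble n p.1 p.2.1 p.2.2 ∧ bubbleSize p.2.1 p.2.2 = q := by
  classical
  unfold PP
  simp only [mem_filter, mem_product, mem_univ, mem_range, true_and, and_iff_right_iff_imp]
  rintro ⟨-, ⟨h1, h2, -⟩, -⟩
  omega

noncomputable def XX {n : ℕ} (p : Equiv.Perm (Fin (2 * n)) × ℕ × ℕ) : ℕ :=
  bridges n p.1 p.2.1 p.2.2

open Classical in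
lemma N_eq (n q b : ℕ) : N n q b = ((PP n q).filter (fun p => XX p = b)).card := by
  unfold N
  apply Nat.subtype_card
  intro p
  rw [mem_filter, mem_PP, XX]
  tauto

open Classical in
lemma bridges_eq (n : ℕ) (f : Equiv.Perm (Fin (2 * n))) (a b : ℕ) :
    bridges n f a b = (univ.filter (fun i : Fin (2 * n) => (a ≤ i.val ∧ i.val ≤ b) ∧
      ¬ (a ≤ (f i).val ∧ (f i).val ≤ b))).card := by
  unfold bridges
  apply Nat.subtype_card
  intro i
  simp

lemma XX_le {n : ℕ} (p : Equiv.Perm (Fin (2 * n)) × ℕ × ℕ) : XX p ≤ 2 * n := by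
  classical
  rw [XX, bridges_eq]
  exact (card_le_univ _).trans (by simp)

lemma sum_N (n q : ℕ) (F : ℕ → ℝ) :
    ∑ b ∈ range (2 * n + 1), F b * (N n q b : ℝ) = ∑ p ∈ PP n q, F (XX p) := by
  classical
  rw [← sum_fiberwise_of_maps_to (g := fun p => XX p) (t := range (2 * n + 1))
    (fun p _ => mem_range.2 (Nat.lt_succ_of_le (XX_le p)))]
  refine sum_congr rfl fun b _ => ?_
  rw [N_eq, sum_congr rfl (g := fun _ => F b), sum_const, nsmul_eq_mul, mul_comm]
  intro p hp
  rw [(mem_filter.1 hp).2]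

/-- conditions for a down move -/
def DC {n : ℕ} (p : Equiv.Perm (Fin (2 * n)) × ℕ × ℕ) (t : Fin (2 * n) × Fin (2 * n)) : Prop :=
  ((p.2.1 ≤ t.1.val ∧ t.1.val ≤ p.2.2) ∧ (p.2.1 ≤ (p.1 t.1).val ∧ (p.1 t.1).val ≤ p.2.2)) ∧
  (¬ (p.2.1 ≤ t.2.val ∧ t.2.val ≤ p.2.2) ∧ ¬ (p.2.1 ≤ (p.1 t.2).val ∧ (p.1 t.2).val ≤ p.2.2)) ∧
  ¬ (t.2.val + 1 = p.2.1 ∨ t.2.val + 2 = p.2.1 ∨ t.2.val = p.2.2 + 1 ∨ t.2.val = p.2.2 + 2)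

/-- conditions for an up move -/
def UC {n : ℕ} (p : Equiv.Perm (Fin (2 * n)) × ℕ × ℕ) (t : Fin (2 * n) × Fin (2 * n)) : Prop :=
  ((p.2.1 ≤ t.1.val ∧ t.1.val ≤ p.2.2) ∧ ¬ (p.2.1 ≤ (p.1 t.1).val ∧ (p.1 t.1).val ≤ p.2.2)) ∧
  (¬ (p.2.1 ≤ t.2.val ∧ t.2.val ≤ p.2.2) ∧ (p.2.1 ≤ (p.1 t.2).val ∧ (p.1 t.2).val ≤ p.2.2)) ∧
  ¬ ((p.1 t.2).val + 1 = t.1.val ∨ (p.1 t.2).val = t.1.val ∨ (p.1 t.2).val = t.1.val + 1)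

def cj {n : ℕ} (f : Equiv.Perm (Fin (2 * n))) (t : Fin (2 * n) × Fin (2 * n)) :
    Equiv.Perm (Fin (2 * n)) := Equiv.swap t.1 t.2 * f * Equiv.swap t.1 t.2

lemma cj_cj {n : ℕ} (f : Equiv.Perm (Fin (2 * n))) (t) : cj (cj f t) t = f := by
  ext i; simp [cj]

lemma cj_diag {n : ℕ} {f : Equiv.Perm (Fin (2 * n))} (h : IsDiagram n f) (t) :
    IsDiagram n (cj f t) := by
  constructor
  · intro i; simp [cj, h.1]
  · intro i hi
    have := congrArg (Equiv.swap t.1 t.2) hi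
    simp only [cj, Equiv.Perm.mul_apply, Equiv.swap_apply_self] at this
    exact h.2 _ this

/-- values of the conjugate -/
lemma cj_vals {n : ℕ} {f : Equiv.Perm (Fin (2 * n))} (h : IsDiagram n f) (j x : Fin (2 * n))
    (h1 : j ≠ x) (h2 : f j ≠ x) :
    cj f (j, x) j = f x ∧ cj f (j, x) x = f j ∧ cj f (j, x) (f j) = x ∧ cj f (j, x) (f x) = j ∧
    ∀ i, i ≠ j → i ≠ x → i ≠ f j → i ≠ f x → cj f (j, x) i = f i := by
  have h3 : f x ≠ j := fun e => h2 (by rw [← e, h.1])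
  have hj := h.2 j
  have hx := h.2 x
  have hjj := h.1 j
  have hxx := h.1 x
  refine ⟨?_, ?_, ?_, ?_, ?_⟩
  · simp [cj, Equiv.swap_apply_of_ne_of_ne h3 hx]
  · simp [cj, Equiv.swap_apply_of_ne_of_ne hj h2]
  · simp [cj, Equiv.swap_apply_of_ne_of_ne hj h2, hjj]
  · simp [cj, Equiv.swap_apply_of_ne_of_ne h3 hx, hxx]
  · intro i a b c d
    simp only [cj, Equiv.Perm.mul_apply, Equiv.swap_apply_of_ne_of_ne a b]
    apply Equiv.swap_apply_of_ne_of_ne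
    · intro e; exact c (by rw [← e, h.1])
    · intro e; exact d (by rw [← e, h.1])

/-- bubble, pointwise boundary form -/
lemma bub_left {n : ℕ} {f : Equiv.Perm (Fin (2 * n))} {a b : ℕ} (hd : IsDiagram n f)
    (h : IsBubble n f a b) (y : Fin (2 * n)) :
    (y.val + 1 = a → (f y).val + 2 = a) ∧ (y.val + 2 = a → (f y).val + 1 = a) ∧
    (y.val = b + 1 → (f y).val = b + 2) ∧ (y.val = b + 2 → (f y).val = b + 1) := by
  obtain ⟨_, h2, h3, h4, h5⟩ := h
  have L : ∀ j : Fin (2 * n), j.val + 1 = a → ShortEnd n f j → (f j).val + 2 = a := by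
    intro j hj hs
    rcases hs with hs | hs
    · exfalso
      refine h3 (f j) (by omega) (by omega) ?_
      right; rw [hd.1]; omega
    · omega
  have R : ∀ j : Fin (2 * n), j.val = b + 1 → ShortEnd n f j → (f j).val = b + 2 := by
    intro j hj hs
    rcases hs with hs | hs
    · omega
    · exfalso
      refine h3 (f j) (by omega) (by omega) ?_
      left; rw [hd.1]; omega
  refine ⟨?_, ?_, ?_, ?_⟩
  · intro hy
    rcases h4 with h4 | ⟨j, hj, hs⟩
    · omega
    · have : j = y := Fin.ext (by omega)
      subst this; exact L _ hj hs
  · intro hy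
    rcases h4 with h4 | ⟨j, hj, hs⟩
    · omega
    · have := L _ hj hs
      have e : f j = y := Fin.ext (by omega)
      rw [← e, hd.1]; omega
  · intro hy
    rcases h5 with h5 | ⟨j, hj, hs⟩
    · have := y.2; omega
    · have : j = y := Fin.ext (by omega)
      subst this; exact R _ hj hs
  · intro hy
    rcases h5 with h5 | ⟨j, hj, hs⟩
    · have := y.2; omega
    · have := R _ hj hs
      have e : f j = y := Fin.ext (by omega)
      rw [← e, hd.1]; omega

/-- A perm agreeing with `f` on the boundary vertices, without short chords inside. -/
lemma bub_transfer {n : ℕ} {f g : Equiv.Perm (Fin (2 * n))} {a b : ℕ}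
    (h : IsBubble n f a b)
    (h1 : ∀ y : Fin (2 * n), (y.val + 1 = a ∨ y.val = b + 1) → g y = f y)
    (h2 : ∀ i : Fin (2 * n), a ≤ i.val → i.val ≤ b → ¬ ShortEnd n g i) : IsBubble n g a b := by
  obtain ⟨k1, k2, k3, k4, k5⟩ := h
  refine ⟨k1, k2, h2, ?_, ?_⟩
  · refine k4.imp id ?_
    rintro ⟨j, hj, hs⟩
    exact ⟨j, hj, by unfold ShortEnd at *; rwa [h1 j (Or.inl hj)]⟩
  · refine k5.imp id ?_
    rintro ⟨j, hj, hs⟩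
    exact ⟨j, hj, by unfold ShortEnd at *; rwa [h1 j (Or.inr hj)]⟩

lemma down_ok {n q : ℕ} {p : Equiv.Perm (Fin (2 * n)) × ℕ × ℕ} (hp : p ∈ PP n q)
    {t : Fin (2 * n) × Fin (2 * n)} (ht : DC p t) :
    (cj p.1 t, p.2) ∈ PP n q ∧ UC (cj p.1 t, p.2) t := by
  obtain ⟨f, a, b⟩ := p
  obtain ⟨j, x⟩ := t
  obtain ⟨hd, hb, hs⟩ := mem_PP.1 hp
  simp only [DC] at ht hd hb hs ⊢
  obtain ⟨⟨t1, t2⟩, ⟨t3, t4⟩, t5⟩ := ht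
  have hjx : j ≠ x := by rintro rfl; exact t3 t1
  have hfjx : f j ≠ x := by rintro rfl; exact t3 t2
  obtain ⟨v1, v2, v3, v4, v5⟩ := cj_vals hd j x hjx hfjx
  have bx := bub_left hd hb x
  have bfx := bub_left hd hb (f x)
  rw [hd.1] at bfx
  have nsj := hb.2.2.1 j t1.1 t1.2
  unfold ShortEnd at nsj
  have hne : (f j).val ≠ j.val := fun e => hd.2 j (Fin.ext e)
  refine ⟨mem_PP.2 ⟨cj_diag hd _, ?_, hs⟩, ?_⟩
  · show IsBubble n (cj f (j, x)) a b
    refine bub_transfer hb ?_ ?_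
    · intro y hy
      apply v5 <;> rintro rfl <;> omega
    · intro i hi1 hi2
      by_cases e1 : i = j
      · subst e1; unfold ShortEnd; simp only [v1]; omega
      by_cases e2 : i = f j
      · subst e2; unfold ShortEnd; simp only [v3]; omega
      have := hb.2.2.1 i hi1 hi2
      unfold ShortEnd at this ⊢
      rwa [v5 i e1 (by rintro rfl; omega) e2 (by rintro rfl; omega)]
  · simp only [UC, v1, v2]
    omega

lemma up_ok {n q : ℕ} {p : Equiv.Perm (Fin (2 * n)) × ℕ × ℕ} (hp : p ∈ PP n q)
    {t : Fin (2 * n) × Fin (2 * n)} (ht : UC p t) :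
    (cj p.1 t, p.2) ∈ PP n q ∧ DC (cj p.1 t, p.2) t := by
  obtain ⟨f, a, b⟩ := p
  obtain ⟨j, x⟩ := t
  obtain ⟨hd, hb, hs⟩ := mem_PP.1 hp
  simp only [UC] at ht hd hb hs ⊢
  obtain ⟨⟨t1, t2⟩, ⟨t3, t4⟩, t5⟩ := ht
  have hjx : j ≠ x := by rintro rfl; exact t3 t1
  have hfjx : f j ≠ x := by rintro rfl; rw [hd.1] at t5; omega
  obtain ⟨v1, v2, v3, v4, v5⟩ := cj_vals hd j x hjx hfjx
  have bx := bub_left hd hb x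
  have bfj := bub_left hd hb (f j)
  rw [hd.1] at bfj
  refine ⟨mem_PP.2 ⟨cj_diag hd _, ?_, hs⟩, ?_⟩
  · show IsBubble n (cj f (j, x)) a b
    refine bub_transfer hb ?_ ?_
    · intro y hy
      apply v5 <;> rintro rfl <;> omega
    · intro i hi1 hi2
      by_cases e1 : i = j
      · subst e1; unfold ShortEnd; simp only [v1]; omega
      by_cases e2 : i = f x
      · subst e2; unfold ShortEnd; simp only [v4]; omega
      have := hb.2.2.1 i hi1 hi2
      unfold ShortEnd at this ⊢
      rwa [v5 i e1 (by rintro rfl; omega) (by rintro rfl; omega) e2]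
  · simp only [DC, v1, v2]
    omega

lemma XX_down {n q : ℕ} {p : Equiv.Perm (Fin (2 * n)) × ℕ × ℕ} (hp : p ∈ PP n q)
    {t : Fin (2 * n) × Fin (2 * n)} (ht : DC p t) :
    XX (cj p.1 t, p.2) = XX p + 2 := by
  classical
  obtain ⟨f, a, b⟩ := p
  obtain ⟨j, x⟩ := t
  obtain ⟨hd, hb, hs⟩ := mem_PP.1 hp
  simp only [DC] at ht hd hb hs ⊢
  obtain ⟨⟨t1, t2⟩, ⟨t3, t4⟩, t5⟩ := ht
  have hjx : j ≠ x := by rintro rfl; exact t3 t1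
  have hfjx : f j ≠ x := by rintro rfl; exact t3 t2
  obtain ⟨v1, v2, v3, v4, v5⟩ := cj_vals hd j x hjx hfjx
  simp only [XX, bridges_eq]
  have hne := hd.2 j
  set S := univ.filter (fun i : Fin (2 * n) => (a ≤ i.val ∧ i.val ≤ b) ∧
      ¬ (a ≤ (f i).val ∧ (f i).val ≤ b)) with hS
  have n1 : f j ∉ S := by simp [hS, hd.1, t1]
  have n2 : j ∉ insert (f j) S := by
    rw [mem_insert, not_or]; exact ⟨hne.symm, by simp [hS, t2]⟩
  have : univ.filter (fun i : Fin (2 * n) => (a ≤ i.val ∧ i.val ≤ b) ∧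
      ¬ (a ≤ (cj f (j, x) i).val ∧ (cj f (j, x) i).val ≤ b)) = insert j (insert (f j) S) := by
    ext i
    simp only [mem_filter, mem_univ, true_and, mem_insert, hS]
    by_cases e1 : i = j
    · subst e1; rw [v1]; simp only [true_or, iff_true]; exact ⟨t1, t4⟩
    by_cases e2 : i = f j
    · subst e2; rw [v3]; simp only [true_or, or_true, iff_true]; exact ⟨t2, t3⟩
    by_cases e3 : i = x
    · subst e3; simp [e1, e2, t3]
    by_cases e4 : i = f x
    · subst e4; simp [e1, e2, t4]
    rw [v5 i e1 e3 e2 e4]; simp [e1, e2]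
  rw [this, card_insert_of_notMem n2, card_insert_of_notMem n1]

open Classical in
noncomputable def DD {n : ℕ} (p : Equiv.Perm (Fin (2 * n)) × ℕ × ℕ) : ℕ :=
  (univ.filter (fun t => DC p t)).card

open Classical in
noncomputable def UU {n : ℕ} (p : Equiv.Perm (Fin (2 * n)) × ℕ × ℕ) : ℕ :=
  (univ.filter (fun t => UC p t)).card

lemma stein (n q : ℕ) (g : ℕ → ℝ) :
    ∑ p ∈ PP n q, (DD p : ℝ) * g (XX p + 2) = ∑ p ∈ PP n q, (UU p : ℝ) * g (XX p) := by
  classical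
  have e1 : ∀ p : Equiv.Perm (Fin (2 * n)) × ℕ × ℕ,
      (DD p : ℝ) * g (XX p + 2) = ∑ t ∈ univ.filter (fun t => DC p t), g (XX p + 2) := by
    intro p; rw [sum_const, nsmul_eq_mul, DD]
  have e2 : ∀ p : Equiv.Perm (Fin (2 * n)) × ℕ × ℕ,
      (UU p : ℝ) * g (XX p) = ∑ t ∈ univ.filter (fun t => UC p t), g (XX p) := by
    intro p; rw [sum_const, nsmul_eq_mul, UU]
  simp only [e1, e2]
  rw [sum_sigma', sum_sigma']
  refine sum_bij' (fun z _ => ⟨(cj z.1.1 z.2, z.1.2), z.2⟩) (fun z _ => ⟨(cj z.1.1 z.2, z.1.2), z.2⟩)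
    ?_ ?_ ?_ ?_ ?_
  · rintro ⟨p, t⟩ h
    simp only [mem_sigma, mem_filter, mem_univ, true_and] at h ⊢
    exact down_ok h.1 h.2
  · rintro ⟨p, t⟩ h
    simp only [mem_sigma, mem_filter, mem_univ, true_and] at h ⊢
    exact up_ok h.1 h.2
  · rintro ⟨p, t⟩ h
    simp [cj_cj]
  · rintro ⟨p, t⟩ h
    simp [cj_cj]
  · rintro ⟨p, t⟩ h
    simp only [mem_sigma, mem_filter, mem_univ, true_and] at h ⊢
    rw [XX_down h.1 h.2]

lemma counts {n q : ℕ} {p : Equiv.Perm (Fin (2 * n)) × ℕ × ℕ} (hp : p ∈ PP n q) :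
    ∃ A B B0 bad : ℕ, A + XX p = q ∧ B + XX p + q = 2 * n ∧ B0 ≤ B ∧ B ≤ B0 + 4 ∧
      DD p = A * B0 ∧ UU p + bad = XX p * XX p ∧ bad ≤ 2 * n * 3 := by
  classical
  obtain ⟨f, a, b⟩ := p
  obtain ⟨hd, hb, hs⟩ := mem_PP.1 hp
  simp only at hd hb hs
  unfold bubbleSize at hs
  have hab := hb.1
  have hbn := hb.2.1
  set inI : Fin (2 * n) → Prop := fun i => a ≤ i.val ∧ i.val ≤ b with hI
  have cI : (univ.filter inI).card = q := by
    rw [← hs, ← Nat.card_Icc]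
    refine card_bij (fun i _ => i.val) ?_ ?_ ?_
    · intro i hi; simpa [hI] using hi
    · intro i _ j _ h; exact Fin.ext h
    · intro k hk
      rw [mem_Icc] at hk
      exact ⟨⟨k, by omega⟩, by simpa [hI] using hk, rfl⟩
  have cI' : (univ.filter inI).card + (univ.filter (fun i => ¬ inI i)).card = 2 * n := by
    rw [card_filter_add_card_filter_not]; simp
  have hX : XX (f, a, b) = (univ.filter (fun i => inI i ∧ ¬ inI (f i))).card := by
    simp only [XX, bridges_eq]; rfl
  have hX' : (univ.filter (fun i => ¬ inI i ∧ inI (f i))).card = XX (f, a, b) := by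
    rw [hX]
    refine card_bij (fun i _ => f i) ?_ ?_ ?_
    · intro i hi
      simp only [mem_filter, mem_univ, true_and, hd.1] at hi ⊢
      exact ⟨hi.2, hi.1⟩
    · intro i _ j _ h; exact f.injective h
    · intro k hk
      simp only [mem_filter, mem_univ, true_and] at hk
      exact ⟨f k, by simp only [mem_filter, mem_univ, true_and, hd.1]; exact ⟨hk.2, hk.1⟩, hd.1 k⟩
  have e1 := card_filter_add_card_filter_not (s := univ.filter inI) (fun i => inI (f i))
  have e2 := card_filter_add_card_filter_not (s := univ.filter (fun i => ¬ inI i))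
    (fun i => inI (f i))
  rw [filter_filter, filter_filter] at e1 e2
  rw [← hX] at e1
  rw [hX'] at e2
  set Bd : Fin (2 * n) → Prop := fun x => x.val + 1 = a ∨ x.val + 2 = a ∨ x.val = b + 1 ∨
    x.val = b + 2 with hBd
  have e3 := card_filter_add_card_filter_not (s := univ.filter (fun i => ¬ inI i ∧ ¬ inI (f i))) Bd
  rw [filter_filter, filter_filter] at e3
  have e4 : (univ.filter (fun i => (¬ inI i ∧ ¬ inI (f i)) ∧ Bd i)).card ≤ 4 := by
    have : ({a - 1, a - 2, b + 1, b + 2} : Finset ℕ).card ≤ 4 := card_le_four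
    refine le_trans (card_le_card_of_injOn (fun i => i.val) ?_ ?_) this
    · intro i hi
      simp only [coe_filter, mem_univ, true_and, Set.mem_ofPred_eq, hBd] at hi
      simp only [coe_insert, coe_singleton, Set.mem_insert_iff, Set.mem_singleton_iff]
      omega
    · intro i _ j _ h; exact Fin.ext h
  have e5 : DD (f, a, b) = (univ.filter (fun i => inI i ∧ inI (f i))).card *
      (univ.filter (fun i => (¬ inI i ∧ ¬ inI (f i)) ∧ ¬ Bd i)).card := by
    rw [DD, ← card_product]
    congr 1
    ext ⟨j, x⟩
    rw [mem_filter, mem_product, mem_filter, mem_filter]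
    constructor
    · rintro ⟨-, h1, h2, h3⟩
      exact ⟨⟨mem_univ _, h1⟩, mem_univ _, h2, h3⟩
    · rintro ⟨⟨-, h1⟩, -, h2, h3⟩
      exact ⟨mem_univ _, h1, h2, h3⟩
  set T := (univ.filter (fun i => inI i ∧ ¬ inI (f i))) ×ˢ
    (univ.filter (fun i => ¬ inI i ∧ inI (f i))) with hT
  set bd : Fin (2 * n) × Fin (2 * n) → Prop := fun t =>
    (f t.2).val + 1 = t.1.val ∨ (f t.2).val = t.1.val ∨ (f t.2).val = t.1.val + 1 with hbd
  have cT : T.card = XX (f, a, b) * XX (f, a, b) := by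
    rw [hT, card_product, hX', ← hX]
  have e6 := card_filter_add_card_filter_not (s := T) bd
  have e7 : UU (f, a, b) = (T.filter (fun t => ¬ bd t)).card := by
    rw [UU]
    congr 1
    ext ⟨j, x⟩
    rw [mem_filter, mem_filter, hT, mem_product, mem_filter, mem_filter]
    constructor
    · rintro ⟨-, h1, h2, h3⟩
      exact ⟨⟨⟨mem_univ _, h1⟩, mem_univ _, h2⟩, h3⟩
    · rintro ⟨⟨⟨-, h1⟩, -, h2⟩, h3⟩
      exact ⟨mem_univ _, h1, h2, h3⟩
  have e8 : (T.filter bd).card ≤ 2 * n * 3 := by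
    have : ((univ : Finset (Fin (2 * n))) ×ˢ range 3).card = 2 * n * 3 := by simp
    rw [← this]
    refine card_le_card_of_injOn (fun t => (t.2, t.1.val + 1 - (f t.2).val)) ?_ ?_
    · rintro ⟨j, x⟩ hi
      simp only [coe_filter, Set.mem_ofPred_eq, hbd] at hi
      simp only [coe_product, Set.mem_prod, mem_coe, mem_univ, mem_range, true_and]
      omega
    · rintro ⟨j, x⟩ h1 ⟨j', x'⟩ h2 h
      simp only [coe_filter, Set.mem_ofPred_eq, hbd] at h1 h2
      simp only [Prod.mk.injEq] at h
      obtain ⟨rfl, h⟩ := h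
      have : j = j' := Fin.ext (by omega)
      rw [this]
  refine ⟨_, (univ.filter (fun i => ¬ inI i ∧ ¬ inI (f i))).card, _, _, e1.trans cI, ?_, ?_, ?_, e5,
    ?_, e8⟩
  · omega
  · omega
  · omega
  · rw [e7, ← cT, ← e6, add_comm]

lemma exF_even (n q k : ℕ) (h4 : 4 ≤ q) (hqn : q + 3 ≤ 2 * n) (hk : q = 2 * k) :
    ∃ F : ℕ → ℕ, (∀ i < 2 * n, F i < 2 * n) ∧
      (∀ i < 2 * n, F (F i) = i) ∧ (∀ i < 2 * n, F i ≠ i) ∧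
      ((∀ i < q, F i ≠ i + 1 ∧ F i + 1 ≠ i) ∧ F q = q + 1) := by
  obtain ⟨F, c1, c2, c3, c4⟩ : ∃ F : ℕ → ℕ, (∀ i, i < k → F i = i + k) ∧
      (∀ i, k ≤ i → i < 2 * k → F i = i - k) ∧
      (∀ i, 2 * k ≤ i → i % 2 = 0 → F i = i + 1) ∧
      (∀ i, 2 * k ≤ i → i % 2 = 1 → F i = i - 1) := by
    refine ⟨fun i => if i < k then i + k else if i < 2 * k then i - k else
        if i % 2 = 0 then i + 1 else i - 1, ?_, ?_, ?_, ?_⟩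
    · intro i h; exact if_pos h
    · intro i h h'; simp only; rw [if_neg (by omega), if_pos h']
    · intro i h h'; simp only; rw [if_neg (by omega), if_neg (by omega), if_pos h']
    · intro i h h'; simp only; rw [if_neg (by omega), if_neg (by omega), if_neg (by omega)]
  have main : ∀ i < 2 * n, F i < 2 * n ∧ F (F i) = i ∧ F i ≠ i ∧
      (i < q → F i ≠ i + 1 ∧ F i + 1 ≠ i) := by
    intro i hi
    rcases lt_or_ge i k with h | h
    · rw [c1 i h, c2 (i + k) (by omega) (by omega)]; omega
    rcases lt_or_ge i (2 * k) with h' | h'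
    · rw [c2 i h h', c1 (i - k) (by omega)]; omega
    rcases Nat.mod_two_eq_zero_or_one i with e | e
    · rw [c3 i h' e, c4 (i + 1) (by omega) (by omega)]; omega
    · rw [c4 i h' e, c3 (i - 1) (by omega) (by omega)]; omega
  exact ⟨F, fun i hi => (main i hi).1, fun i hi => (main i hi).2.1, fun i hi => (main i hi).2.2.1,
    fun i hi => (main i (by omega)).2.2.2 hi, c3 q (by omega) (by omega)⟩

lemma exF_odd (n q k : ℕ) (h4 : 4 ≤ q) (hqn : q + 3 ≤ 2 * n) (hk : q = 2 * k + 1) :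
    ∃ F : ℕ → ℕ, (∀ i < 2 * n, F i < 2 * n) ∧
      (∀ i < 2 * n, F (F i) = i) ∧ (∀ i < 2 * n, F i ≠ i) ∧
      ((∀ i < q, F i ≠ i + 1 ∧ F i + 1 ≠ i) ∧ F q = q + 1) := by
  obtain ⟨F, c1, c2, c3, c4, c5, c6⟩ : ∃ F : ℕ → ℕ, (∀ i, i < k → F i = i + k) ∧
      (∀ i, k ≤ i → i < 2 * k → F i = i - k) ∧
      (∀ i, 2 * k < i → i < 2 * n - 1 → i % 2 = 1 → F i = i + 1) ∧
      (∀ i, 2 * k < i → i < 2 * n - 1 → i % 2 = 0 → F i = i - 1) ∧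
      F (2 * k) = 2 * n - 1 ∧ F (2 * n - 1) = 2 * k := by
    refine ⟨fun i => if i < k then i + k else if i < 2 * k then i - k else
        if i = 2 * k then 2 * n - 1 else if i = 2 * n - 1 then 2 * k else
        if i % 2 = 1 then i + 1 else i - 1, ?_, ?_, ?_, ?_, ?_, ?_⟩
    · intro i h; exact if_pos h
    · intro i h h'; simp only; rw [if_neg (by omega), if_pos h']
    · intro i h h' h''; simp only
      rw [if_neg (by omega), if_neg (by omega), if_neg (by omega), if_neg (by omega), if_pos h'']
    · intro i h h' h''; simp only
      rw [if_neg (by omega), if_neg (by omega), if_neg (by omega), if_neg (by omega),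
        if_neg (by omega)]
    · simp only; rw [if_neg (by omega), if_neg (by omega), if_pos trivial]
    · simp only; rw [if_neg (by omega), if_neg (by omega), if_neg (by omega), if_pos trivial]
  have main : ∀ i < 2 * n, F i < 2 * n ∧ F (F i) = i ∧ F i ≠ i ∧
      (i < q → F i ≠ i + 1 ∧ F i + 1 ≠ i) := by
    intro i hi
    rcases lt_or_ge i k with h | h
    · rw [c1 i h, c2 (i + k) (by omega) (by omega)]; omega
    rcases lt_or_ge i (2 * k) with h' | h'
    · rw [c2 i h h', c1 (i - k) (by omega)]; omega
    rcases eq_or_lt_of_le h' with e | h'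
    · subst e; rw [c5, c6]; omega
    rcases eq_or_ne i (2 * n - 1) with e | e
    · subst e; rw [c6, c5]; omega
    rcases Nat.mod_two_eq_zero_or_one i with e' | e'
    · rw [c4 i h' (by omega) e', c3 (i - 1) (by omega) (by omega) (by omega)]; omega
    · rw [c3 i h' (by omega) e', c4 (i + 1) (by omega) (by omega) (by omega)]; omega
  exact ⟨F, fun i hi => (main i hi).1, fun i hi => (main i hi).2.1, fun i hi => (main i hi).2.2.1,
    fun i hi => (main i (by omega)).2.2.2 hi, c3 q (by omega) (by omega) (by omega)⟩

lemma nonempty_PP (n q : ℕ) (h4 : 4 ≤ q) (hqn : q + 3 ≤ 2 * n) : (PP n q).Nonempty := by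
  classical
  obtain ⟨k, hk⟩ : ∃ k, q = 2 * k ∨ q = 2 * k + 1 := ⟨q / 2, by omega⟩
  obtain ⟨F, hF1, hF2, hF3, hF4⟩ : ∃ F : ℕ → ℕ, (∀ i < 2 * n, F i < 2 * n) ∧
      (∀ i < 2 * n, F (F i) = i) ∧ (∀ i < 2 * n, F i ≠ i) ∧
      ((∀ i < q, F i ≠ i + 1 ∧ F i + 1 ≠ i) ∧ F q = q + 1) := by
    rcases hk with hk | hk
    · exact exF_even n q k h4 hqn hk
    · exact exF_odd n q k h4 hqn hk
  let G : Fin (2 * n) → Fin (2 * n) := fun i => ⟨F i.val, hF1 _ i.2⟩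
  have hG : ∀ i, G (G i) = i := fun i => Fin.ext (hF2 _ i.2)
  let f : Equiv.Perm (Fin (2 * n)) := ⟨G, G, hG, hG⟩
  refine ⟨(f, 0, q - 1), mem_PP.2 ⟨⟨hG, ?_⟩, ⟨?_, ?_, ?_, Or.inl rfl, Or.inr ?_⟩, ?_⟩⟩
  · intro i hi
    exact hF3 _ i.2 (congrArg Fin.val hi)
  · simp
  · simp only; omega
  · intro i _ hi hs
    have h1 := hF4.1 i.val (by simp only at hi; omega)
    rcases hs with hs | hs
    · exact h1.1 hs
    · exact h1.2 hs
  · refine ⟨⟨q, by omega⟩, by simp only; omega, Or.inl ?_⟩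
    exact hF4.2
  · simp only [bubbleSize]; omega

/-- abstract second-moment computation -/
lemma abstract_bound {ι : Type*} (P : Finset ι) (hP : P.Nonempty) (X D U : ι → ℝ) (n q : ℝ)
    (hn : 0 < n) (hq0 : 0 ≤ q) (hqn : q ≤ 2 * n)
    (hX0 : ∀ i ∈ P, 0 ≤ X i) (hXn : ∀ i ∈ P, X i ≤ 2 * n)
    (hD : ∀ i ∈ P, |D i - (q - X i) * (2 * n - q - X i)| ≤ 8 * n)
    (hU : ∀ i ∈ P, |U i - X i ^ 2| ≤ 6 * n)
    (hst : ∀ g : ℝ → ℝ, ∑ i ∈ P, D i * g (X i + 2) = ∑ i ∈ P, U i * g (X i)) :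
    ∃ V A m : ℝ, 0 ≤ A ∧ A ^ 2 ≤ V ∧ |V - q ^ 2 * (2 * n - q) ^ 2 / (4 * n ^ 3)| ≤ 9 * A + 8 ∧
      |m| ≤ 7 ∧
      (∑ i ∈ P, (X i - (∑ i ∈ P, X i) / P.card) ^ 2) / P.card = V - m ^ 2 := by
  set μ := q * (2 * n - q) / (2 * n) with hμ
  have hμn : 2 * n * μ = q * (2 * n - q) := by rw [hμ]; field_simp
  set s := q ^ 2 * (2 * n - q) ^ 2 / (4 * n ^ 3) with hs
  have hsn : n * s = (q - μ) * (2 * n - q - μ) := by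
    rw [hs, hμ]; field_simp; ring
  have hμ0 : 0 ≤ μ := by
    have : 0 ≤ 2 * n - q := by linarith
    positivity
  have hμ1 : μ ≤ 2 * n := by nlinarith
  set Y : ι → ℝ := fun i => X i - μ with hY
  have hc : (0 : ℝ) < P.card := by exact_mod_cast hP.card_pos
  set c : ℝ := (P.card : ℝ) with hcdef
  set SA := ∑ i ∈ P, |Y i| with hSA
  set S1 := ∑ i ∈ P, Y i with hS1
  set S2 := ∑ i ∈ P, Y i ^ 2 with hS2
  have hSA0 : 0 ≤ SA := sum_nonneg fun i _ => abs_nonneg _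
  have hCS : SA ^ 2 ≤ c * S2 := by
    have := sq_sum_le_card_mul_sum_sq (s := P) (f := fun i => |Y i|)
    simpa only [sq_abs] using this
  have hε : ∀ i ∈ P, |D i - U i + 2 * n * Y i| ≤ 14 * n := by
    intro i hi
    have h1 := abs_le.1 (hD i hi)
    have h2 := abs_le.1 (hU i hi)
    have : (q - X i) * (2 * n - q - X i) - X i ^ 2 = - (2 * n * Y i) := by
      simp only [hY]; linear_combination (-1 : ℝ) * hμn
    rw [abs_le]; constructor <;> linarith [h1.1, h1.2, h2.1, h2.2]
  have m1 : |2 * n * S1| ≤ c * (14 * n) := by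
    have h0 := hst (fun _ => 1)
    have : 2 * n * S1 = ∑ i ∈ P, (D i - U i + 2 * n * Y i) := by
      rw [sum_add_distrib, sum_sub_distrib, ← mul_sum]
      simp only [mul_one] at h0
      rw [h0]; ring
    rw [this]
    refine (abs_sum_le_sum_abs _ _).trans ((sum_le_sum hε).trans ?_)
    rw [sum_const, nsmul_eq_mul]
  have m2 : |2 * n * S2 - 2 * ∑ i ∈ P, D i| ≤ 14 * n * SA := by
    have h0 := hst (fun x => x - μ)
    have : 2 * n * S2 - 2 * ∑ i ∈ P, D i = ∑ i ∈ P, (D i - U i + 2 * n * Y i) * Y i := by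
      have e : ∑ i ∈ P, (D i - U i + 2 * n * Y i) * Y i =
          ∑ i ∈ P, D i * (X i + 2 - μ) - ∑ i ∈ P, U i * (X i - μ) + 2 * n * S2
            - 2 * ∑ i ∈ P, D i := by
        rw [hS2, mul_sum, mul_sum, ← sum_sub_distrib, ← sum_add_distrib, ← sum_sub_distrib]
        refine sum_congr rfl fun i _ => ?_
        simp only [hY]; ring
      rw [e, h0]; ring
    rw [this, hSA, mul_sum]
    refine (abs_sum_le_sum_abs _ _).trans (sum_le_sum fun i hi => ?_)
    rw [abs_mul]
    exact mul_le_mul_of_nonneg_right (hε i hi) (abs_nonneg _)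
  have m3 : |∑ i ∈ P, D i - c * (n * s)| ≤ c * (8 * n) + 2 * n * SA := by
    have : ∑ i ∈ P, D i - c * (n * s) = ∑ i ∈ P, (D i - n * s) := by
      rw [sum_sub_distrib, sum_const, nsmul_eq_mul]
    rw [this]
    have e : c * (8 * n) + 2 * n * SA = ∑ i ∈ P, (8 * n + 2 * n * |Y i|) := by
      rw [sum_add_distrib, sum_const, nsmul_eq_mul, ← mul_sum]
    rw [e]
    refine (abs_sum_le_sum_abs _ _).trans (sum_le_sum fun i hi => ?_)
    have h1 := hD i hi
    have h2 : D i - n * s = (D i - (q - X i) * (2 * n - q - X i)) + (X i + μ - 2 * n) * Y i := by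
      rw [hsn]; simp only [hY]; ring
    rw [h2]
    refine (abs_add_le _ _).trans (add_le_add h1 ?_)
    rw [abs_mul]
    refine mul_le_mul_of_nonneg_right ?_ (abs_nonneg _)
    rw [abs_le]
    constructor <;> linarith [hX0 i hi, hXn i hi]
  refine ⟨S2 / c, SA / c, S1 / c, by positivity, ?_, ?_, ?_, ?_⟩
  · rw [div_pow, div_le_div_iff₀ (by positivity) hc]
    nlinarith
  · have : S2 / c - s = (S2 - c * s) / c := by field_simp
    rw [this, abs_div, abs_of_pos hc, div_le_iff₀ hc]
    have e : (9 * (SA / c) + 8) * c = 9 * SA + 8 * c := by field_simp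
    rw [e]
    have m2' := abs_le.1 m2
    have m3' := abs_le.1 m3
    rw [abs_le]
    constructor
    · refine le_of_mul_le_mul_left ?_ (show 0 < 2 * n by positivity)
      nlinarith [m2'.1, m3'.1]
    · refine le_of_mul_le_mul_left ?_ (show 0 < 2 * n by positivity)
      nlinarith [m2'.2, m3'.2]
  · rw [abs_div, abs_of_pos hc, div_le_iff₀ hc]
    rw [abs_mul, abs_of_pos (by positivity : 0 < 2 * n)] at m1
    refine le_of_mul_le_mul_left ?_ (show 0 < 2 * n by positivity)
    linarith
  · have hm : ∑ i ∈ P, X i = S1 + c * μ := by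
      rw [hS1]; simp only [hY]; rw [sum_sub_distrib, sum_const, nsmul_eq_mul]; ring
    have : ∀ i, (X i - (∑ i ∈ P, X i) / c) ^ 2 = Y i ^ 2 - 2 * (S1 / c) * Y i + (S1 / c) ^ 2 := by
      intro i
      rw [hm]; simp only [hY]; field_simp; ring
    simp only [this]
    rw [sum_add_distrib, sum_sub_distrib, sum_const, nsmul_eq_mul, ← mul_sum]
    rw [← hS1, ← hS2, ← hcdef]
    field_simp; ring

lemma var_bound (n q : ℕ) (h4 : 4 ≤ q) (hqn : q + 3 ≤ 2 * n) :
    ∃ V A m : ℝ, 0 ≤ A ∧ A ^ 2 ≤ V ∧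
      |V - (q : ℝ) ^ 2 * (2 * n - q) ^ 2 / (4 * (n : ℝ) ^ 3)| ≤ 9 * A + 8 ∧
      |m| ≤ 7 ∧ varBridges n q = V - m ^ 2 := by
  have hn : 0 < n := by omega
  have hnR : (0 : ℝ) < n := by exact_mod_cast hn
  have hqR : (q : ℝ) ≤ 2 * n := by exact_mod_cast (by omega : q ≤ 2 * n)
  have hc : ∑ b ∈ range (2 * n + 1), (N n q b : ℝ) = (PP n q).card := by
    have := sum_N n q (fun _ => 1)
    simpa using this
  have key := abstract_bound (PP n q) (nonempty_PP n q h4 hqn) (fun p => (XX p : ℝ))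
    (fun p => (DD p : ℝ)) (fun p => (UU p : ℝ)) n q hnR (by positivity) hqR
    (fun p _ => by positivity) (fun p _ => by exact_mod_cast XX_le p) ?_ ?_ ?_
  · obtain ⟨V, A, m, a1, a2, a3, a4, a5⟩ := key
    refine ⟨V, A, m, a1, a2, a3, a4, ?_⟩
    rw [← a5, varBridges, hc, sum_N n q (fun b => ((b : ℝ) - meanBridges n q) ^ 2), meanBridges, hc,
      sum_N n q (fun b => (b : ℝ))]
  · intro p hp
    obtain ⟨A, B, B0, bad, c1, c2, c3, c4, c5, c6, c7⟩ := counts hp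
    have hA : (q : ℝ) - XX p = A := by rw [← c1]; push_cast; ring
    have hB : 2 * (n : ℝ) - q - XX p = B := by
      have : ((B + XX p + q : ℕ) : ℝ) = (2 * n : ℕ) := by rw [c2]
      push_cast at this; linarith
    have h3 : (B0 : ℝ) ≤ B := by exact_mod_cast c3
    have h4' : (B : ℝ) ≤ B0 + 4 := by exact_mod_cast c4
    have hA2 : (A : ℝ) ≤ 2 * n := by exact_mod_cast (by omega : A ≤ 2 * n)
    have hA0 : (0 : ℝ) ≤ A := by positivity
    rw [hA, hB, c5]
    push_cast
    rw [abs_le]; constructor <;> nlinarith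
  · intro p hp
    obtain ⟨A, B, B0, bad, c1, c2, c3, c4, c5, c6, c7⟩ := counts hp
    have h6 : (UU p : ℝ) + bad = XX p * XX p := by exact_mod_cast c6
    have h7 : (bad : ℝ) ≤ 2 * n * 3 := by exact_mod_cast c7
    have h8 : (0 : ℝ) ≤ bad := by positivity
    rw [abs_le]; constructor <;> nlinarith
  · intro g
    have := stein n q (fun k => g (k : ℝ))
    simpa using this

lemma final_bound (s V A m : ℝ) (hs : 98 ≤ s) (hA : 0 ≤ A) (hAV : A ^ 2 ≤ V)
    (h : |V - s| ≤ 9 * A + 8) (hm : |m| ≤ 7) : |(V - m ^ 2) / s - 1| ≤ 75 / √s := by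
  have hs0 : 0 < s := by linarith
  have hr : 0 < √s := Real.sqrt_pos.2 hs0
  have hrs : √s * √s = s := Real.mul_self_sqrt hs0.le
  obtain ⟨h1, h2⟩ := abs_le.1 h
  have hm2 : m ^ 2 ≤ 49 := by
    have := sq_le_sq' (abs_le.1 hm).1 (abs_le.1 hm).2
    linarith
  have hm0 := sq_nonneg m
  have hA2 : A ^ 2 ≤ 3 * s := by nlinarith [sq_nonneg (A - 9)]
  have hAr : A ≤ 2 * √s := by
    by_contra hcon
    push Not at hcon
    nlinarith
  have hr1 : 1 ≤ √s := by
    rw [Real.one_le_sqrt]; linarith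
  have : (V - m ^ 2) / s - 1 = (V - m ^ 2 - s) / s := by field_simp
  rw [this, abs_div, abs_of_pos hs0, div_le_div_iff₀ hs0 hr]
  have h5 : |V - m ^ 2 - s| ≤ 75 * √s := by
    rw [abs_le]; constructor <;> nlinarith
  nlinarith

end aux

/-- The variance of the number of bridges of bubbles of size `q n` in diagrams with `n` chords is
asymptotic to `q²(2n-q)²/(4n³)` whenever `q n / n → c` with `0 < c < 2`. -/
theorem var_bridges_asymptotic (c : ℝ) (hc0 : 0 < c) (hc2 : c < 2) (q : ℕ → ℕ)
    (hq : Filter.Tendsto (fun n => (q n : ℝ) / n) Filter.atTop (nhds c)) :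
    Filter.Tendsto
      (fun n => varBridges n (q n) * (4 * (n : ℝ) ^ 3) /
        ((q n : ℝ) ^ 2 * (2 * (n : ℝ) - (q n : ℝ)) ^ 2))
      Filter.atTop (nhds 1) := by
  have hs : Filter.Tendsto (fun n : ℕ => (q n : ℝ) ^ 2 * (2 * (n : ℝ) - (q n : ℝ)) ^ 2 / (4 * (n : ℝ) ^ 3))
      Filter.atTop Filter.atTop := by
    have h1 : Filter.Tendsto (fun n : ℕ => ((q n : ℝ) / n) ^ 2 * (2 - (q n : ℝ) / n) ^ 2 / 4) Filter.atTop
        (nhds (c ^ 2 * (2 - c) ^ 2 / 4)) :=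
      ((hq.pow 2).mul ((tendsto_const_nhds.sub hq).pow 2)).div_const 4
    have h2 : 0 < c ^ 2 * (2 - c) ^ 2 / 4 := by
      have : 0 < 2 - c := by linarith
      positivity
    have h3 := h1.pos_mul_atTop h2 (tendsto_natCast_atTop_atTop (R := ℝ))
    refine h3.congr' ?_
    filter_upwards [Filter.eventually_gt_atTop 0] with n hn
    have : (n : ℝ) ≠ 0 := by positivity
    field_simp
  have hev : ∀ᶠ n : ℕ in Filter.atTop, 4 ≤ q n ∧ q n + 3 ≤ 2 * n := by
    have a1 : Filter.Tendsto (fun n : ℕ => (q n : ℝ) / n * n) Filter.atTop Filter.atTop :=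
      hq.pos_mul_atTop hc0 (tendsto_natCast_atTop_atTop (R := ℝ))
    have a2 : Filter.Tendsto (fun n : ℕ => (2 - (q n : ℝ) / n) * n) Filter.atTop Filter.atTop :=
      (tendsto_const_nhds.sub hq).pos_mul_atTop (by linarith)
        (tendsto_natCast_atTop_atTop (R := ℝ))
    filter_upwards [Filter.eventually_gt_atTop 0, a1.eventually_ge_atTop 4,
      a2.eventually_ge_atTop 3] with n hn b1 b2
    have hn0 : (n : ℝ) ≠ 0 := by positivity
    rw [div_mul_cancel₀ _ hn0] at b1
    rw [sub_mul, div_mul_cancel₀ _ hn0] at b2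
    refine ⟨by exact_mod_cast b1, ?_⟩
    have : (q n : ℝ) + 3 ≤ 2 * n := by linarith
    exact_mod_cast this
  rw [tendsto_iff_norm_sub_tendsto_zero]
  have hlim : Filter.Tendsto (fun n : ℕ => 75 / √((q n : ℝ) ^ 2 * (2 * (n : ℝ) - (q n : ℝ)) ^ 2 /
      (4 * (n : ℝ) ^ 3))) Filter.atTop (nhds 0) :=
    (Real.tendsto_sqrt_atTop.comp hs).const_div_atTop 75
  refine squeeze_zero' (Filter.Eventually.of_forall fun n => norm_nonneg _) ?_ hlim
  filter_upwards [hev, hs.eventually_ge_atTop 98] with n hn h98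
  obtain ⟨V, A, m, a1, a2, a3, a4, a5⟩ := var_bound n (q n) hn.1 hn.2
  have := final_bound _ V A m h98 a1 a2 a3 a4
  rw [Real.norm_eq_abs, a5, ← div_div_eq_mul_div]
  exact this

end ChordBubbles
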